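/- Let L be a 3-dimensional real ω-Lie algebra with ω not identically zero (a nontrivial, i.e. non-Lie, real ω-Lie algebra). Then L is isomorphic to one of the following real ω-Lie algebras, each given on a basis {x,y,z} with all unlisted values of ω on basis pairs equal to 0: L₁ ([x,y] = y, [x,z] = 0, [y,z] = z, ω(x,y) = 1); L₂ ([x,y] = 0, [x,z] = y, [y,z] = z, ω(x,z) = 1); A_α ([x,y] = x, [x,z] = x+y, [y,z] = z+αx, ω(y,z) = −1) for some α ∈ ℝ; C_α ([x,y] = y, [x,z] = αz, [y,z] = x, ω(y,z) = 1+α) for some nonzero α ∈ ℝ; B₁ ([x,y] = y, [x,z] = y+z, [y,z] = x, ω(y,z) = 2); B₋₁ ([x,y] = y, [x,z] = y+z, [y,z] = −x, ω(y,z) = −2); E_α⁺ ([x,y] = −z, [x,z] = y+αz, [y,z] = x, ω(y,z) = α) for some nonzero α ∈ ℝ; or E_α⁻ ([x,y] = −z, [x,z] = y+αz, [y,z] = −x, ω(y,z) = −α) for some nonzero α ∈ ℝ. -/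

import Mathlib

/-- The bracket of the real `L₁` on `ℝ³`: bilinear extension of `[x,y] = y`,
`[x,z] = 0`, `[y,z] = z` on the standard basis `x = e₀, y = e₁, z = e₂`. -/
def brL1 (u v : Fin 3 → ℝ) : Fin 3 → ℝ :=
  ![0, u 0 * v 1 - u 1 * v 0, u 1 * v 2 - u 2 * v 1]

/-- The form of the real `L₁`: bilinear extension of `ω(x,y) = 1`, other values `0`. -/
def omL1 (u v : Fin 3 → ℝ) : ℝ := u 0 * v 1 - u 1 * v 0

/-- The bracket of the real `L₂` on `ℝ³`: bilinear extension of `[x,y] = 0`,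
`[x,z] = y`, `[y,z] = z`. -/
def brL2 (u v : Fin 3 → ℝ) : Fin 3 → ℝ :=
  ![0, u 0 * v 2 - u 2 * v 0, u 1 * v 2 - u 2 * v 1]

/-- The form of the real `L₂`: bilinear extension of `ω(x,z) = 1`, other values `0`. -/
def omL2 (u v : Fin 3 → ℝ) : ℝ := u 0 * v 2 - u 2 * v 0

/-- The bracket of the real `A_α` on `ℝ³`: bilinear extension of `[x,y] = x`,
`[x,z] = x + y`, `[y,z] = z + α x`. -/
def brA (α : ℝ) (u v : Fin 3 → ℝ) : Fin 3 → ℝ :=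
  ![(u 0 * v 1 - u 1 * v 0) + (u 0 * v 2 - u 2 * v 0) + α * (u 1 * v 2 - u 2 * v 1),
    u 0 * v 2 - u 2 * v 0, u 1 * v 2 - u 2 * v 1]

/-- The form of the real `A_α`: bilinear extension of `ω(y,z) = -1`, other values `0`. -/
def omA (u v : Fin 3 → ℝ) : ℝ := -(u 1 * v 2 - u 2 * v 1)

/-- The bracket of the real `C_α` on `ℝ³`: bilinear extension of `[x,y] = y`,
`[x,z] = α z`, `[y,z] = x`. -/
def brC (α : ℝ) (u v : Fin 3 → ℝ) : Fin 3 → ℝ :=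
  ![u 1 * v 2 - u 2 * v 1, u 0 * v 1 - u 1 * v 0, α * (u 0 * v 2 - u 2 * v 0)]

/-- The form of the real `C_α`: bilinear extension of `ω(y,z) = 1 + α`, other values `0`. -/
def omC (α : ℝ) (u v : Fin 3 → ℝ) : ℝ := (1 + α) * (u 1 * v 2 - u 2 * v 1)

/-- The bracket of the real `B₁` on `ℝ³`: bilinear extension of `[x,y] = y`,
`[x,z] = y + z`, `[y,z] = x`. -/
def brB1 (u v : Fin 3 → ℝ) : Fin 3 → ℝ :=
  ![u 1 * v 2 - u 2 * v 1, (u 0 * v 1 - u 1 * v 0) + (u 0 * v 2 - u 2 * v 0),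
    u 0 * v 2 - u 2 * v 0]

/-- The form of the real `B₁`: bilinear extension of `ω(y,z) = 2`, other values `0`. -/
def omB1 (u v : Fin 3 → ℝ) : ℝ := 2 * (u 1 * v 2 - u 2 * v 1)

/-- The bracket of the real `B₋₁` on `ℝ³`: bilinear extension of `[x,y] = y`,
`[x,z] = y + z`, `[y,z] = -x`. -/
def brBm1 (u v : Fin 3 → ℝ) : Fin 3 → ℝ :=
  ![-(u 1 * v 2 - u 2 * v 1), (u 0 * v 1 - u 1 * v 0) + (u 0 * v 2 - u 2 * v 0),
    u 0 * v 2 - u 2 * v 0]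

/-- The form of the real `B₋₁`: bilinear extension of `ω(y,z) = -2`, other values `0`. -/
def omBm1 (u v : Fin 3 → ℝ) : ℝ := -2 * (u 1 * v 2 - u 2 * v 1)

/-- The bracket of `E_α⁺` on `ℝ³`: bilinear extension of `[x,y] = -z`,
`[x,z] = y + α z`, `[y,z] = x`. -/
def brEp (α : ℝ) (u v : Fin 3 → ℝ) : Fin 3 → ℝ :=
  ![u 1 * v 2 - u 2 * v 1, u 0 * v 2 - u 2 * v 0,
    -(u 0 * v 1 - u 1 * v 0) + α * (u 0 * v 2 - u 2 * v 0)]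

/-- The form of `E_α⁺`: bilinear extension of `ω(y,z) = α`, other values `0`. -/
def omEp (α : ℝ) (u v : Fin 3 → ℝ) : ℝ := α * (u 1 * v 2 - u 2 * v 1)

/-- The bracket of `E_α⁻` on `ℝ³`: bilinear extension of `[x,y] = -z`,
`[x,z] = y + α z`, `[y,z] = -x`. -/
def brEm (α : ℝ) (u v : Fin 3 → ℝ) : Fin 3 → ℝ :=
  ![-(u 1 * v 2 - u 2 * v 1), u 0 * v 2 - u 2 * v 0,
    -(u 0 * v 1 - u 1 * v 0) + α * (u 0 * v 2 - u 2 * v 0)]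

/-- The form of `E_α⁻`: bilinear extension of `ω(y,z) = -α`, other values `0`. -/
def omEm (α : ℝ) (u v : Fin 3 → ℝ) : ℝ := -α * (u 1 * v 2 - u 2 * v 1)

/-- `(L, bracket, ω)` is isomorphic, as a real ω-Lie algebra, to the ω-Lie algebra on
`ℝ³` with bracket `br'` and form `ω'`: there is a linear bijection intertwining the
brackets and the bilinear forms. -/
def IsOmegaLieIsoTo {L : Type*} [AddCommGroup L] [Module ℝ L]
    (bracket : L →ₗ[ℝ] L →ₗ[ℝ] L) (ω : L →ₗ[ℝ] L →ₗ[ℝ] ℝ)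
    (br' : (Fin 3 → ℝ) → (Fin 3 → ℝ) → (Fin 3 → ℝ))
    (ω' : (Fin 3 → ℝ) → (Fin 3 → ℝ) → ℝ) : Prop :=
  ∃ f : L ≃ₗ[ℝ] (Fin 3 → ℝ),
    (∀ a b : L, f (bracket a b) = br' (f a) (f b)) ∧
    (∀ a b : L, ω' (f a) (f b) = ω a b)


def OLInd {L : Type*} [AddCommGroup L] [Module ℝ L] (x y z : L) : Prop :=
  ∀ p q r : ℝ, p • x + q • y + r • z = 0 → p = 0 ∧ q = 0 ∧ r = 0

theorem olind_change {L : Type*} [AddCommGroup L] [Module ℝ L] {x y z : L} (h : OLInd x y z)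
    {x' y' z' : L} (a1 a2 a3 b1 b2 b3 c1 c2 c3 : ℝ)
    (hx : x' = a1 • x + a2 • y + a3 • z) (hy : y' = b1 • x + b2 • y + b3 • z)
    (hz : z' = c1 • x + c2 • y + c3 • z)
    (hd : a1 * (b2 * c3 - b3 * c2) - a2 * (b1 * c3 - b3 * c1) + a3 * (b1 * c2 - b2 * c1) ≠ 0) :
    OLInd x' y' z' := by
  intro p q r hpqr
  obtain ⟨h1, h2, h3⟩ := h (p * a1 + q * b1 + r * c1) (p * a2 + q * b2 + r * c2)
    (p * a3 + q * b3 + r * c3) (by rw [← hpqr, hx, hy, hz]; module)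
  refine ⟨?_, ?_, ?_⟩
  · refine (mul_eq_zero.1 ?_).resolve_right hd
    linear_combination (b2 * c3 - b3 * c2) * h1 - (b1 * c3 - b3 * c1) * h2
      + (b1 * c2 - b2 * c1) * h3
  · refine (mul_eq_zero.1 ?_).resolve_right hd
    linear_combination -(a2 * c3 - a3 * c2) * h1 + (a1 * c3 - a3 * c1) * h2
      - (a1 * c2 - a2 * c1) * h3
  · refine (mul_eq_zero.1 ?_).resolve_right hd
    linear_combination (a2 * b3 - a3 * b2) * h1 - (a1 * b3 - a3 * b1) * h2
      + (a1 * b2 - a2 * b1) * h3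

theorem olind_eq {L : Type*} [AddCommGroup L] [Module ℝ L] {x y z : L} (h : OLInd x y z)
    {a b c a' b' c' : ℝ} (he : a • x + b • y + c • z = a' • x + b' • y + c' • z) :
    a = a' ∧ b = b' ∧ c = c' := by
  obtain ⟨h1, h2, h3⟩ := h (a - a') (b - b') (c - c') (by
    rw [← sub_eq_zero] at he; rw [← he]; module)
  exact ⟨by linarith, by linarith, by linarith⟩

theorem olind_basis {L : Type*} [AddCommGroup L] [Module ℝ L] [FiniteDimensional ℝ L]
    (hdim : Module.finrank ℝ L = 3) {x y z : L} (h : OLInd x y z) :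
    ∃ b : Module.Basis (Fin 3) ℝ L, b 0 = x ∧ b 1 = y ∧ b 2 = z := by
  have hl : LinearIndependent ℝ ![x, y, z] := by
    rw [Fintype.linearIndependent_iff]
    intro g hg
    simp only [Fin.sum_univ_three] at hg
    obtain ⟨h1, h2, h3⟩ := h (g 0) (g 1) (g 2) (by simpa using hg)
    intro i
    fin_cases i <;> assumption
  refine ⟨basisOfLinearIndependentOfCardEqFinrank hl (by simp [hdim]), ?_, ?_, ?_⟩ <;> simp

theorem olind_span {L : Type*} [AddCommGroup L] [Module ℝ L] [FiniteDimensional ℝ L]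
    (hdim : Module.finrank ℝ L = 3) {x y z : L} (h : OLInd x y z) (v : L) :
    ∃ p q r : ℝ, v = p • x + q • y + r • z := by
  obtain ⟨b, rfl, rfl, rfl⟩ := olind_basis hdim h
  refine ⟨b.repr v 0, b.repr v 1, b.repr v 2, ?_⟩
  conv_lhs => rw [← b.sum_repr v]
  rw [Fin.sum_univ_three]

def OLTab {L : Type*} [AddCommGroup L] [Module ℝ L] (B : L →ₗ[ℝ] L →ₗ[ℝ] L) (x y z : L)
    (a b c d e f r s t : ℝ) : Prop :=
  OLInd x y z ∧ B x y = a • x + b • y + c • z ∧ B x z = d • x + e • y + f • z ∧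
    B y z = r • x + s • y + t • z

theorem ol_self {L : Type*} [AddCommGroup L] [Module ℝ L] {B : L →ₗ[ℝ] L →ₗ[ℝ] L}
    (hB : ∀ a b : L, B a b = - B b a) (a : L) : B a a = 0 := by
  have h := hB a a
  have h2 : (2 : ℝ) • B a a = 0 := by rw [two_smul]; nth_rewrite 1 [h]; simp
  exact (smul_eq_zero.1 h2).resolve_left (by norm_num)

theorem ol_expand {L : Type*} [AddCommGroup L] [Module ℝ L] {B : L →ₗ[ℝ] L →ₗ[ℝ] L}
    (hB : ∀ a b : L, B a b = - B b a) (x y z : L) (a1 a2 a3 b1 b2 b3 : ℝ) :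
    B (a1 • x + a2 • y + a3 • z) (b1 • x + b2 • y + b3 • z) =
      (a1 * b2 - a2 * b1) • B x y + (a1 * b3 - a3 * b1) • B x z
        + (a2 * b3 - a3 * b2) • B y z := by
  simp only [map_add, map_smul, LinearMap.add_apply, LinearMap.smul_apply, ol_self hB,
    hB y x, hB z x, hB z y]
  module

theorem ol_change {L : Type*} [AddCommGroup L] [Module ℝ L] {B : L →ₗ[ℝ] L →ₗ[ℝ] L}
    (hB : ∀ a b : L, B a b = - B b a) {x y z : L} {a b c d e f r s t : ℝ}
    (h : OLTab B x y z a b c d e f r s t) {x' y' : L} (a1 a2 a3 b1 b2 b3 : ℝ)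
    (hx : x' = a1 • x + a2 • y + a3 • z) (hy : y' = b1 • x + b2 • y + b3 • z) :
    B x' y' =
      ((a1 * b2 - a2 * b1) * a + (a1 * b3 - a3 * b1) * d + (a2 * b3 - a3 * b2) * r) • x +
      ((a1 * b2 - a2 * b1) * b + (a1 * b3 - a3 * b1) * e + (a2 * b3 - a3 * b2) * s) • y +
      ((a1 * b2 - a2 * b1) * c + (a1 * b3 - a3 * b1) * f + (a2 * b3 - a3 * b2) * t) • z := by
  rw [hx, hy, ol_expand hB, h.2.1, h.2.2.1, h.2.2.2]
  module

/-- change of basis; the target table is checked by coefficients. -/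
theorem oltab_change {L : Type*} [AddCommGroup L] [Module ℝ L] {B : L →ₗ[ℝ] L →ₗ[ℝ] L}
    (hB : ∀ a b : L, B a b = - B b a) {x y z : L} {a b c d e f r s t : ℝ}
    (h : OLTab B x y z a b c d e f r s t)
    (a1 a2 a3 b1 b2 b3 c1 c2 c3 : ℝ) (a' b' c' d' e' f' r' s' t' : ℝ)
    (hd : a1 * (b2 * c3 - b3 * c2) - a2 * (b1 * c3 - b3 * c1) + a3 * (b1 * c2 - b2 * c1) ≠ 0)
    (h1 : (a1 * b2 - a2 * b1) * a + (a1 * b3 - a3 * b1) * d + (a2 * b3 - a3 * b2) * r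
      = a' * a1 + b' * b1 + c' * c1)
    (h2 : (a1 * b2 - a2 * b1) * b + (a1 * b3 - a3 * b1) * e + (a2 * b3 - a3 * b2) * s
      = a' * a2 + b' * b2 + c' * c2)
    (h3 : (a1 * b2 - a2 * b1) * c + (a1 * b3 - a3 * b1) * f + (a2 * b3 - a3 * b2) * t
      = a' * a3 + b' * b3 + c' * c3)
    (h4 : (a1 * c2 - a2 * c1) * a + (a1 * c3 - a3 * c1) * d + (a2 * c3 - a3 * c2) * r
      = d' * a1 + e' * b1 + f' * c1)
    (h5 : (a1 * c2 - a2 * c1) * b + (a1 * c3 - a3 * c1) * e + (a2 * c3 - a3 * c2) * s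
      = d' * a2 + e' * b2 + f' * c2)
    (h6 : (a1 * c2 - a2 * c1) * c + (a1 * c3 - a3 * c1) * f + (a2 * c3 - a3 * c2) * t
      = d' * a3 + e' * b3 + f' * c3)
    (h7 : (b1 * c2 - b2 * c1) * a + (b1 * c3 - b3 * c1) * d + (b2 * c3 - b3 * c2) * r
      = r' * a1 + s' * b1 + t' * c1)
    (h8 : (b1 * c2 - b2 * c1) * b + (b1 * c3 - b3 * c1) * e + (b2 * c3 - b3 * c2) * s
      = r' * a2 + s' * b2 + t' * c2)
    (h9 : (b1 * c2 - b2 * c1) * c + (b1 * c3 - b3 * c1) * f + (b2 * c3 - b3 * c2) * t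
      = r' * a3 + s' * b3 + t' * c3) :
    OLTab B (a1 • x + a2 • y + a3 • z) (b1 • x + b2 • y + b3 • z) (c1 • x + c2 • y + c3 • z)
      a' b' c' d' e' f' r' s' t' := by
  refine ⟨olind_change h.1 a1 a2 a3 b1 b2 b3 c1 c2 c3 rfl rfl rfl hd, ?_, ?_, ?_⟩
  · rw [ol_change hB h a1 a2 a3 b1 b2 b3 rfl rfl, h1, h2, h3]; module
  · rw [ol_change hB h a1 a2 a3 c1 c2 c3 rfl rfl, h4, h5, h6]; module
  · rw [ol_change hB h b1 b2 b3 c1 c2 c3 rfl rfl, h7, h8, h9]; module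

section
variable {L : Type*} [AddCommGroup L] [Module ℝ L] [FiniteDimensional ℝ L]

/-- Consequences of the Jacobi identity. -/
theorem ol_jac {bracket : L →ₗ[ℝ] L →ₗ[ℝ] L} {ω : L →ₗ[ℝ] L →ₗ[ℝ] ℝ}
    (hanti : ∀ a b : L, bracket a b = - bracket b a)
    (hjac : ∀ a b c : L,
      bracket (bracket a b) c + bracket (bracket b c) a + bracket (bracket c a) b
        = ω a b • c + ω b c • a + ω c a • b)
    {x y z : L} {a b c d e f r s t : ℝ}
    (h : OLTab bracket x y z a b c d e f r s t) :
    ω y z = (b + f) * r - s * a - t * d ∧ ω z x = e * (a - t) - d * b + f * s ∧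
      ω x y = a * f + b * t - c * (s + d) := by
  have hj := hjac x y z
  rw [h.2.1, h.2.2.2, hanti z x, h.2.2.1] at hj
  have e1 := ol_change hanti h a b c 0 0 1 rfl (show z = (0:ℝ) • x + (0:ℝ) • y + (1:ℝ) • z by module)
  have e2 := ol_change hanti h r s t 1 0 0 rfl (show x = (1:ℝ) • x + (0:ℝ) • y + (0:ℝ) • z by module)
  have e3 := ol_change hanti h (-d) (-e) (-f) 0 1 0
    (show -(d • x + e • y + f • z) = (-d) • x + (-e) • y + (-f) • z by module)
    (show y = (0:ℝ) • x + (1:ℝ) • y + (0:ℝ) • z by module)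
  rw [e1, e2, e3] at hj
  obtain ⟨k1, k2, k3⟩ := h.1 ((b + f) * r - s * a - t * d - ω y z)
    (e * (a - t) - d * b + f * s - ω z x) (a * f + b * t - c * (s + d) - ω x y) (by
    rw [← sub_eq_zero] at hj
    rw [← hj]
    module)
  refine ⟨?_, ?_, ?_⟩
  · linear_combination -k1
  · linear_combination -k2
  · linear_combination -k3

theorem ol_iso {bracket : L →ₗ[ℝ] L →ₗ[ℝ] L} {ω : L →ₗ[ℝ] L →ₗ[ℝ] ℝ}
    (hanti : ∀ a b : L, bracket a b = - bracket b a)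
    (hskew : ∀ a b : L, ω a b = - ω b a)
    (hjac : ∀ a b c : L,
      bracket (bracket a b) c + bracket (bracket b c) a + bracket (bracket c a) b
        = ω a b • c + ω b c • a + ω c a • b)
    (hdim : Module.finrank ℝ L = 3)
    {x y z : L} {a b c d e f r s t : ℝ}
    (h : OLTab bracket x y z a b c d e f r s t)
    {br' : (Fin 3 → ℝ) → (Fin 3 → ℝ) → (Fin 3 → ℝ)}
    {ω' : (Fin 3 → ℝ) → (Fin 3 → ℝ) → ℝ}
    (hbr : ∀ u v, br' u v =
      ![(u 0 * v 1 - u 1 * v 0) * a + (u 0 * v 2 - u 2 * v 0) * d + (u 1 * v 2 - u 2 * v 1) * r,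
        (u 0 * v 1 - u 1 * v 0) * b + (u 0 * v 2 - u 2 * v 0) * e + (u 1 * v 2 - u 2 * v 1) * s,
        (u 0 * v 1 - u 1 * v 0) * c + (u 0 * v 2 - u 2 * v 0) * f + (u 1 * v 2 - u 2 * v 1) * t])
    (hom : ∀ u v, ω' u v = (u 0 * v 1 - u 1 * v 0) * (a * f + b * t - c * (s + d))
      - (u 0 * v 2 - u 2 * v 0) * (e * (a - t) - d * b + f * s)
      + (u 1 * v 2 - u 2 * v 1) * ((b + f) * r - s * a - t * d)) :
    IsOmegaLieIsoTo bracket ω br' ω' := by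
  obtain ⟨k1, k2, k3⟩ := ol_jac hanti hjac h
  obtain ⟨B, rfl, rfl, rfl⟩ := olind_basis hdim h.1
  have hexp : ∀ v : L, v = B.equivFun v 0 • B 0 + B.equivFun v 1 • B 1 + B.equivFun v 2 • B 2 := by
    intro v
    conv_lhs => rw [← B.sum_equivFun v]
    rw [Fin.sum_univ_three]
  refine ⟨B.equivFun, ?_, ?_⟩
  · intro u v
    rw [ol_change hanti h _ _ _ _ _ _ (hexp u) (hexp v), hbr]
    generalize B.equivFun u = p
    generalize B.equivFun v = q
    ext i
    fin_cases i <;> simp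
  · intro u v
    have hself : ∀ w, ω w w = 0 := fun w => by linarith [hskew w w]
    rw [hom, ← k1, ← k2, ← k3]
    conv_rhs => rw [hexp u, hexp v]
    simp only [map_add, map_smul, LinearMap.add_apply, LinearMap.smul_apply, hself,
      hskew (B 1) (B 0), hskew (B 2) (B 0), hskew (B 2) (B 1), smul_eq_mul]
    ring

def OLConcl (bracket : L →ₗ[ℝ] L →ₗ[ℝ] L) (ω : L →ₗ[ℝ] L →ₗ[ℝ] ℝ) : Prop :=
    IsOmegaLieIsoTo bracket ω brL1 omL1 ∨
      IsOmegaLieIsoTo bracket ω brL2 omL2 ∨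
      (∃ α : ℝ, IsOmegaLieIsoTo bracket ω (brA α) omA) ∨
      (∃ α : ℝ, α ≠ 0 ∧ IsOmegaLieIsoTo bracket ω (brC α) (omC α)) ∨
      IsOmegaLieIsoTo bracket ω brB1 omB1 ∨
      IsOmegaLieIsoTo bracket ω brBm1 omBm1 ∨
      (∃ α : ℝ, α ≠ 0 ∧ IsOmegaLieIsoTo bracket ω (brEp α) (omEp α)) ∨
      (∃ α : ℝ, α ≠ 0 ∧ IsOmegaLieIsoTo bracket ω (brEm α) (omEm α))

/-- The final recognition of the normal forms by structure constants. -/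
theorem ol_recog {bracket : L →ₗ[ℝ] L →ₗ[ℝ] L} {ω : L →ₗ[ℝ] L →ₗ[ℝ] ℝ}
    (hanti : ∀ a b : L, bracket a b = - bracket b a)
    (hskew : ∀ a b : L, ω a b = - ω b a)
    (hjac : ∀ a b c : L,
      bracket (bracket a b) c + bracket (bracket b c) a + bracket (bracket c a) b
        = ω a b • c + ω b c • a + ω c a • b)
    (hdim : Module.finrank ℝ L = 3) {x y z : L}
    (h : OLTab bracket x y z 0 1 0 0 0 0 0 0 1 ∨ OLTab bracket x y z 0 0 0 0 1 0 0 0 1 ∨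
      (∃ α, OLTab bracket x y z 1 0 0 1 1 0 α 0 1) ∨
      (∃ α, α ≠ 0 ∧ OLTab bracket x y z 0 1 0 0 0 α 1 0 0) ∨
      (∃ α, α ≠ 0 ∧ OLTab bracket x y z 0 0 (-1) 0 1 α 1 0 0) ∨
      (∃ α, α ≠ 0 ∧ OLTab bracket x y z 0 0 (-1) 0 1 α (-1) 0 0)) :
    OLConcl bracket ω := by
  rcases h with h | h | ⟨α, h⟩ | ⟨α, h0, h⟩ | ⟨α, h0, h⟩ | ⟨α, h0, h⟩
  · refine Or.inl (ol_iso hanti hskew hjac hdim h ?_ ?_)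
    · intro u v; ext i; fin_cases i <;> simp [brL1]
    · intro u v; simp only [omL1]; ring
  · refine Or.inr (Or.inl (ol_iso hanti hskew hjac hdim h ?_ ?_))
    · intro u v; ext i; fin_cases i <;> simp [brL2]
    · intro u v; simp only [omL2]; ring
  · refine Or.inr (Or.inr (Or.inl ⟨α, ol_iso hanti hskew hjac hdim h ?_ ?_⟩))
    · intro u v; ext i; fin_cases i <;> simp [brA]; ring
    · intro u v; simp only [omA]; ring
  · refine Or.inr (Or.inr (Or.inr (Or.inl ⟨α, h0, ol_iso hanti hskew hjac hdim h ?_ ?_⟩)))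
    · intro u v; ext i; fin_cases i <;> simp [brC]; ring
    · intro u v; simp only [omC]; ring
  · refine Or.inr (Or.inr (Or.inr (Or.inr (Or.inr (Or.inr (Or.inl
      ⟨α, h0, ol_iso hanti hskew hjac hdim h ?_ ?_⟩))))))
    · intro u v; ext i; fin_cases i <;> simp [brEp]; ring
    · intro u v; simp only [omEp]; ring
  · refine Or.inr (Or.inr (Or.inr (Or.inr (Or.inr (Or.inr (Or.inr
      ⟨α, h0, ol_iso hanti hskew hjac hdim h ?_ ?_⟩))))))
    · intro u v; ext i; fin_cases i <;> simp [brEm]; ring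
    · intro u v; simp only [omEm]; ring

/-- There is some basis in normal form. -/
def OLNorm (B : L →ₗ[ℝ] L →ₗ[ℝ] L) : Prop :=
  ∃ x y z : L, OLTab B x y z 0 1 0 0 0 0 0 0 1 ∨ OLTab B x y z 0 0 0 0 1 0 0 0 1 ∨
      (∃ α, OLTab B x y z 1 0 0 1 1 0 α 0 1) ∨
      (∃ α, α ≠ 0 ∧ OLTab B x y z 0 1 0 0 0 α 1 0 0) ∨
      (∃ α, α ≠ 0 ∧ OLTab B x y z 0 0 (-1) 0 1 α 1 0 0) ∨
      (∃ α, α ≠ 0 ∧ OLTab B x y z 0 0 (-1) 0 1 α (-1) 0 0)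

/-- distinct real eigenvalues -/
theorem ol_split {B : L →ₗ[ℝ] L →ₗ[ℝ] L} (hB : ∀ a b : L, B a b = - B b a)
    {x y z : L} {b c e f r : ℝ} (h : OLTab B x y z 0 b c 0 e f r 0 0)
    (hr : r ≠ 0) (hc : c ≠ 0) (β γ : ℝ) (hs : β + γ = b + f) (hp : β * γ = b * f - c * e)
    (hne : β ≠ γ) (hβ : β ≠ 0) : OLNorm B := by
  have hsub : β - γ ≠ 0 := sub_ne_zero.2 hne
  have hf : f = β + γ - b := by linarith
  have he : e = (b * f - β * γ) / c := by field_simp; linarith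
  subst hf
  subst he
  by_cases hγ : γ = 0
  · subst hγ
    refine ⟨_, _, _, Or.inr (Or.inl (oltab_change hB h
      0 (-(b - β)) (-c) (1 / β) 0 0 0 ((b - 0) / (c * (β - 0) * r * β)) (c / (c * (β - 0) * r * β))
      0 0 0 0 1 0 0 0 1 ?_ ?_ ?_ ?_ ?_ ?_ ?_ ?_ ?_ ?_))⟩
    · have : -(1 / (r * β ^ 2)) ≠ 0 := neg_ne_zero.2 (by positivity)
      convert this using 1; field_simp; ring
    all_goals (field_simp; try ring)
  · refine ⟨_, _, _, Or.inr (Or.inr (Or.inr (Or.inl ⟨γ / β, by positivity, oltab_change hB h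
      (1 / β) 0 0 0 ((b - γ) / (c * (β - γ) * r * β)) (c / (c * (β - γ) * r * β)) 0 (b - β) c
      0 1 0 0 0 (γ / β) 1 0 0 ?_ ?_ ?_ ?_ ?_ ?_ ?_ ?_ ?_ ?_⟩)))⟩
    · have : (1 / (r * β ^ 2)) ≠ 0 := by positivity
      convert this using 1; field_simp; ring
    all_goals (field_simp; try ring)

theorem ol_cyclic {B : L →ₗ[ℝ] L →ₗ[ℝ] L} (hB : ∀ a b : L, B a b = - B b a)
    {x y z : L} {b c e f r : ℝ} (h : OLTab B x y z 0 b c 0 e f r 0 0)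
    (hr : r ≠ 0) (hc : c ≠ 0) (hT : b + f ≠ 0) : OLNorm B := by
  rcases le_or_gt (b * f - c * e) 0 with hdet | hdet
  · have hT2 : 0 < (b + f) ^ 2 := by positivity
    have hdisc : 0 < (b + f) ^ 2 - 4 * (b * f - c * e) := by linarith
    obtain ⟨q, hq0, hq⟩ : ∃ q : ℝ, 0 < q ∧ q ^ 2 = (b + f) ^ 2 - 4 * (b * f - c * e) :=
      ⟨_, Real.sqrt_pos.2 hdisc, Real.sq_sqrt hdisc.le⟩
    by_cases h0 : (b + f + q) / 2 = 0
    · exact ol_split hB h hr hc ((b + f - q) / 2) ((b + f + q) / 2) (by ring) (by nlinarith)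
        (by intro h; linarith) (by intro h1; apply hT; linarith)
    · exact ol_split hB h hr hc ((b + f + q) / 2) ((b + f - q) / 2) (by ring) (by nlinarith)
        (by intro h; linarith) h0
  · obtain ⟨l, hl0, hl⟩ : ∃ l : ℝ, 0 < l ∧ l ^ 2 = b * f - c * e :=
      ⟨_, Real.sqrt_pos.2 hdet, Real.sq_sqrt hdet.le⟩
    have he : e = (b * f - l ^ 2) / c := by field_simp; linarith
    subst he
    obtain ⟨m, hm0, hm⟩ : ∃ m : ℝ, 0 < m ∧ m ^ 2 = |c * r| :=
      ⟨_, Real.sqrt_pos.2 (by positivity), Real.sq_sqrt (by positivity)⟩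
    have hd : (1 / l) * ((1 / m) * (-(c / (l * m)))) ≠ 0 := by
      have : (1 / l) * ((1 / m) * ((c / (l * m)))) ≠ 0 := by positivity
      intro h; apply this; linarith
    rcases lt_or_gt_of_ne (mul_ne_zero hc hr) with hcr | hcr
    · rw [abs_of_neg hcr] at hm
      have hr' : r = - m ^ 2 / c := by field_simp; linarith
      subst hr'
      refine ⟨_, _, _, Or.inr (Or.inr (Or.inr (Or.inr (Or.inl ⟨(b + f) / l, by positivity,
        oltab_change hB h (1 / l) 0 0 0 (1 / m) 0 0 (-(b / (l * m))) (-(c / (l * m)))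
        0 0 (-1) 0 1 ((b + f) / l) 1 0 0 ?_ ?_ ?_ ?_ ?_ ?_ ?_ ?_ ?_ ?_⟩))))⟩
      · convert hd using 1; ring
      all_goals (field_simp; try ring)
    · rw [abs_of_pos hcr] at hm
      have hr' : r = m ^ 2 / c := by field_simp; linarith
      subst hr'
      refine ⟨_, _, _, Or.inr (Or.inr (Or.inr (Or.inr (Or.inr ⟨(b + f) / l, by positivity,
        oltab_change hB h (1 / l) 0 0 0 (1 / m) 0 0 (-(b / (l * m))) (-(c / (l * m)))
        0 0 (-1) 0 1 ((b + f) / l) (-1) 0 0 ?_ ?_ ?_ ?_ ?_ ?_ ?_ ?_ ?_ ?_⟩))))⟩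
      · convert hd using 1; ring
      all_goals (field_simp; try ring)

theorem ol_semi {B : L →ₗ[ℝ] L →ₗ[ℝ] L} (hB : ∀ a b : L, B a b = - B b a)
    {x y z : L} {b c e f r : ℝ} (h : OLTab B x y z 0 b c 0 e f r 0 0)
    (hr : r ≠ 0) (hT : b + f ≠ 0) : OLNorm B := by
  by_cases hc : c = 0
  · by_cases he : e = 0
    · subst hc
      subst he
      by_cases hbf : b = f
      · subst hbf
        have hb : b ≠ 0 := by intro h; apply hT; linarith
        refine ⟨_, _, _, Or.inr (Or.inr (Or.inr (Or.inl ⟨1, one_ne_zero, oltab_change hB h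
          (1 / b) 0 0 0 (1 / (r * b)) 0 0 0 1
          0 1 0 0 0 1 1 0 0 ?_ ?_ ?_ ?_ ?_ ?_ ?_ ?_ ?_ ?_⟩)))⟩
        · have : (1 / b) * (1 / (r * b)) ≠ 0 := by positivity
          convert this using 1; ring
        all_goals (field_simp; try ring)
      · refine ol_cyclic hB (oltab_change hB h 1 0 0 0 1 1 0 0 1 0 b (f - b) 0 0 f r 0 0
          ?_ ?_ ?_ ?_ ?_ ?_ ?_ ?_ ?_ ?_) hr (sub_ne_zero.2 (Ne.symm hbf)) hT
        · norm_num
        all_goals ring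
    · refine ol_cyclic hB (oltab_change hB h 1 0 0 0 0 1 0 1 0 0 f e 0 c b (-r) 0 0
          ?_ ?_ ?_ ?_ ?_ ?_ ?_ ?_ ?_ ?_) (neg_ne_zero.2 hr) he (by rwa [add_comm])
      · norm_num
      all_goals ring
  · exact ol_cyclic hB h hr hc hT

theorem ol_nil {B : L →ₗ[ℝ] L →ₗ[ℝ] L} (hB : ∀ a b : L, B a b = - B b a)
    {x y z : L} {a d e r s : ℝ} (h : OLTab B x y z a 0 0 d e 0 r s a)
    (ha : a ≠ 0) (hs : s + d ≠ 0) : OLNorm B := by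
  by_cases he : e = 0
  · subst he
    refine ⟨_, _, _, Or.inl (oltab_change hB h
      0 (d / (a * (s + d))) (-1 / (s + d))
      (-r / (a * (s + d))) (-(1 / a) + d / (a * (s + d))) (-1 / (s + d)) 1 0 0
      0 1 0 0 0 0 0 0 1 ?_ ?_ ?_ ?_ ?_ ?_ ?_ ?_ ?_ ?_)⟩
    · have : -(1 / (a * (s + d))) ≠ 0 := neg_ne_zero.2 (by positivity)
      convert this using 1; field_simp; ring
    all_goals (field_simp; try ring)
  · refine ⟨_, _, _, Or.inr (Or.inr (Or.inl ⟨(r * e - s * d) / (s + d) ^ 2, oltab_change hB h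
      ((s + d) / (e * a)) 0 0 (-s / (e * a)) (1 / a) 0 0 0 (1 / (s + d))
      1 0 0 1 1 0 _ 0 1 ?_ ?_ ?_ ?_ ?_ ?_ ?_ ?_ ?_ ?_⟩))⟩
    · have : 1 / (e * a ^ 2) ≠ 0 := by positivity
      convert this using 1; field_simp; ring
    all_goals (field_simp; try ring)

/-- trace zero case -/
theorem ol_nil_pre {B : L →ₗ[ℝ] L →ₗ[ℝ] L} {ω : L →ₗ[ℝ] L →ₗ[ℝ] ℝ}
    (hB : ∀ a b : L, B a b = - B b a)
    (hjac : ∀ a b c : L,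
      B (B a b) c + B (B b c) a + B (B c a) b = ω a b • c + ω b c • a + ω c a • b)
    {x y z : L} {a b c d e f r s t : ℝ} (h : OLTab B x y z a b c d e f r s t)
    (hxy : ω x y = 0) (hzx : ω z x = 0) (hyz : ω y z ≠ 0) (hT : b + f = 0) (ht : t = a) :
    OLNorm B := by
  obtain ⟨k1, k2, k3⟩ := ol_jac hB hjac h
  have hf : f = -b := by linarith
  subst hf
  subst ht
  have hw : ω y z = - (t * (s + d)) := by rw [k1]; ring
  have hne : t * (s + d) ≠ 0 := by intro h0; apply hyz; rw [hw, h0, neg_zero]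
  have hsd : s + d ≠ 0 := right_ne_zero_of_mul hne
  rw [hzx] at k2
  rw [hxy] at k3
  have hb : b = 0 := (mul_eq_zero.1 (show b * (s + d) = 0 by linear_combination k2)).resolve_right hsd
  subst hb
  have hc : c = 0 := (mul_eq_zero.1 (show c * (s + d) = 0 by linear_combination k3)).resolve_right hsd
  subst hc
  rw [neg_zero] at h
  exact ol_nil hB h (left_ne_zero_of_mul hne) hsd

theorem ol_norm {B : L →ₗ[ℝ] L →ₗ[ℝ] L} {ω : L →ₗ[ℝ] L →ₗ[ℝ] ℝ}
    (hB : ∀ a b : L, B a b = - B b a) (hskew : ∀ a b : L, ω a b = - ω b a)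
    (hjac : ∀ a b c : L,
      B (B a b) c + B (B b c) a + B (B c a) b = ω a b • c + ω b c • a + ω c a • b)
    {x y z : L} {a b c d e f r s t : ℝ} (h : OLTab B x y z a b c d e f r s t)
    (hxy : ω x y = 0) (hzx : ω z x = 0) (hyz : ω y z ≠ 0) : OLNorm B := by
  have hself : ∀ w, ω w w = 0 := fun w => by linarith [hskew w w]
  have hyx : ω y x = 0 := by rw [hskew, hxy, neg_zero]
  have hxz : ω x z = 0 := by rw [hskew, hzx, neg_zero]
  by_cases hT : b + f = 0
  · by_cases hσ : s + d = 0
    · refine ol_nil_pre hB hjac (ω := ω) (oltab_change hB h 1 0 0 0 0 1 0 1 0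
        d f e a c b (-r) (-t) (-s) ?_ ?_ ?_ ?_ ?_ ?_ ?_ ?_ ?_ ?_) ?_ ?_ ?_ ?_ ?_
      · norm_num
      iterate 9 ring
      · simp [hself, hxz]
      · simp [hself, hyx]
      · simpa [hskew z y] using hyz
      · linarith
      · linarith
    · -- y' = y + l z
      obtain ⟨l, hl⟩ : ∃ l : ℝ, l * (s + d) = t - a := ⟨(t - a) / (s + d), by field_simp⟩
      refine ol_nil_pre hB hjac (ω := ω) (oltab_change hB h 1 0 0 0 1 l 0 0 1
        (a + l * d) (b + l * e) (c + l * f - l * (b + l * e)) d e (f - l * e) r s (t - l * s)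
        ?_ ?_ ?_ ?_ ?_ ?_ ?_ ?_ ?_ ?_) ?_ ?_ ?_ ?_ ?_
      · norm_num
      iterate 9 ring
      · simp [hself, hxy, hxz]
      · simp [hself, hzx]
      · simpa [hself] using hyz
      · linarith
      · linarith
  · obtain ⟨l, hl⟩ : ∃ l : ℝ, l * (b + f) = a - t := ⟨(a - t) / (b + f), by field_simp⟩
    obtain ⟨m, hm⟩ : ∃ m : ℝ, m * (b + f) = s + d := ⟨(s + d) / (b + f), by field_simp⟩
    have h' := oltab_change hB h 1 0 0 l 1 0 m 0 1
      (a - b * l - c * m) b c (d - e * l - f * m) e f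
      (r - m * a + l * d - (s - m * b + l * e) * l - (t - m * c + l * f) * m)
      (s - m * b + l * e) (t - m * c + l * f)
      (by norm_num) (by ring) (by ring) (by ring) (by ring) (by ring) (by ring) (by ring)
      (by ring) (by ring)
    obtain ⟨k1, k2, k3⟩ := ol_jac hB hjac h'
    have w1 : ω ((l:ℝ) • x + (1:ℝ) • y + (0:ℝ) • z) (m • x + (0:ℝ) • y + (1:ℝ) • z) = ω y z := by
      simp [hself, hyx, hxz]
    have w2 : ω (m • x + (0:ℝ) • y + (1:ℝ) • z) ((1:ℝ) • x + (0:ℝ) • y + (0:ℝ) • z) = 0 := by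
      simp [hself, hzx]
    have w3 : ω ((1:ℝ) • x + (0:ℝ) • y + (0:ℝ) • z) (l • x + (1:ℝ) • y + (0:ℝ) • z) = 0 := by
      simp [hself, hxy]
    rw [w1] at k1
    rw [w2] at k2
    rw [w3] at k3
    have ht : t - m * c + l * f = a - b * l - c * m := by linear_combination hl
    have hs : s - m * b + l * e = - (d - e * l - f * m) := by linear_combination -hm
    rw [ht, hs] at h' k1 k2 k3
    generalize a - b * l - c * m = A at *
    generalize d - e * l - f * m = D at *
    have hD : D = 0 := (mul_eq_zero.1 (show D * (b + f) = 0 by linear_combination k2)).resolve_right hT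
    have hA : A = 0 := (mul_eq_zero.1 (show A * (b + f) = 0 by linear_combination -k3)).resolve_right hT
    subst hD
    subst hA
    rw [neg_zero] at h'
    refine ol_semi hB h' ?_ hT
    intro h0
    rw [neg_zero] at k1
    apply hyz
    rw [k1, h0]
    ring

end

/-- Every 3-dimensional real ω-Lie algebra with `ω` not identically zero is isomorphic to
one of `L₁`, `L₂`, `A_α` (`α ∈ ℝ`), `C_α` (`0 ≠ α ∈ ℝ`), `B₁`, `B₋₁`, `E_α⁺`
(`0 ≠ α ∈ ℝ`), or `E_α⁻` (`0 ≠ α ∈ ℝ`). -/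
theorem omega_lie_real_classification
    {L : Type*} [AddCommGroup L] [Module ℝ L] [FiniteDimensional ℝ L]
    (bracket : L →ₗ[ℝ] L →ₗ[ℝ] L) (ω : L →ₗ[ℝ] L →ₗ[ℝ] ℝ)
    (hanti : ∀ a b : L, bracket a b = - bracket b a)
    (hskew : ∀ a b : L, ω a b = - ω b a)
    (hjac : ∀ a b c : L,
      bracket (bracket a b) c + bracket (bracket b c) a + bracket (bracket c a) b
        = ω a b • c + ω b c • a + ω c a • b)
    (hdim : Module.finrank ℝ L = 3)
    (hω : ¬ ∀ a b : L, ω a b = 0) :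
    IsOmegaLieIsoTo bracket ω brL1 omL1 ∨
      IsOmegaLieIsoTo bracket ω brL2 omL2 ∨
      (∃ α : ℝ, IsOmegaLieIsoTo bracket ω (brA α) omA) ∨
      (∃ α : ℝ, α ≠ 0 ∧ IsOmegaLieIsoTo bracket ω (brC α) (omC α)) ∨
      IsOmegaLieIsoTo bracket ω brB1 omB1 ∨
      IsOmegaLieIsoTo bracket ω brBm1 omBm1 ∨
      (∃ α : ℝ, α ≠ 0 ∧ IsOmegaLieIsoTo bracket ω (brEp α) (omEp α)) ∨
      (∃ α : ℝ, α ≠ 0 ∧ IsOmegaLieIsoTo bracket ω (brEm α) (omEm α)) := by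
  have hself : ∀ w, ω w w = 0 := fun w => by linarith [hskew w w]
  push Not at hω
  obtain ⟨y, z, hyz⟩ := hω
  let E : Module.Basis (Fin 3) ℝ L := Module.finBasisOfFinrankEq ℝ L hdim
  have hEz : ∀ v : L, v = E.repr v 0 • E 0 + E.repr v 1 • E 1 + E.repr v 2 • E 2 := by
    intro v
    conv_lhs => rw [← E.sum_repr v]
    rw [Fin.sum_univ_three]
  obtain ⟨x, hx⟩ : ∃ x, x = ω (E 1) (E 2) • E 0 + ω (E 2) (E 0) • E 1 + ω (E 0) (E 1) • E 2 :=
    ⟨_, rfl⟩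
  have hker : ∀ v, ω x v = 0 := by
    intro v
    rw [hEz v, hx]
    simp only [map_add, map_smul, LinearMap.add_apply, LinearMap.smul_apply, hself,
      hskew (E 1) (E 0), hskew (E 2) (E 0), hskew (E 2) (E 1), smul_eq_mul]
    ring
  have hx0 : x ≠ 0 := by
    intro h0
    have hE := Fintype.linearIndependent_iff.1 E.linearIndependent
      ![ω (E 1) (E 2), ω (E 2) (E 0), ω (E 0) (E 1)] (by
        rw [Fin.sum_univ_three]; simpa [hx] using h0)
    have g0 : ω (E 1) (E 2) = 0 := hE 0
    have g1 : ω (E 2) (E 0) = 0 := hE 1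
    have g2 : ω (E 0) (E 1) = 0 := hE 2
    have g1' : ω (E 0) (E 2) = 0 := by rw [hskew, g1, neg_zero]
    apply hyz
    rw [hEz y, hEz z]
    simp only [map_add, map_smul, LinearMap.add_apply, LinearMap.smul_apply, hself,
      hskew (E 1) (E 0), hskew (E 2) (E 1), g0, g1, g2, g1', smul_eq_mul]
    ring
  have hind : OLInd x y z := by
    intro p q r h
    have h1 : ω (p • x + q • y + r • z) z = 0 := by rw [h]; simp
    have h2 : ω (p • x + q • y + r • z) y = 0 := by rw [h]; simp
    simp only [map_add, map_smul, LinearMap.add_apply, LinearMap.smul_apply, hself, hker,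
      hskew z y, smul_eq_mul, mul_zero, add_zero, zero_add, mul_eq_zero, neg_eq_zero, hyz,
      or_false] at h1 h2
    subst h1
    subst h2
    simp only [zero_smul, add_zero, smul_eq_zero, hx0, or_false] at h
    exact ⟨h, rfl, rfl⟩
  obtain ⟨a, b, c, h1⟩ := olind_span hdim hind (bracket x y)
  obtain ⟨d, e, f, h2⟩ := olind_span hdim hind (bracket x z)
  obtain ⟨r, s, t, h3⟩ := olind_span hdim hind (bracket y z)
  obtain ⟨x', y', z', h⟩ := ol_norm hanti hskew hjac ⟨hind, h1, h2, h3⟩ (hker y)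
    (by rw [hskew, hker, neg_zero]) hyz
  exact ol_recog hanti hskew hjac hdim h
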